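/- arXiv:1601.05875 — 2 statements merged into one kernel-verified Lean document; each statement's English description precedes it below -/
import Mathlib

section
/- Let $A \subseteq \mathbb{R}^n$ be a convex set containing $0$, let $1 \le m \le n$, and let $\tilde{A} = \{x_{m+1}^n \in \mathbb{R}^{n-m} : (0^m, x_{m+1}^n) \in A\}$ be the slice of $A$ through the origin. Then $V_n(A) \ge \binom{n}{m}^{-1} \cdot V_{n-m}(\tilde{A}) \cdot V_m(P_{[1:m]}(A))$, where $P_{[1:m]}(A)$ is the projection of $A$ onto the first $m$ coordinates. -/
open MeasureTheory Set ENNReal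

open scoped Pointwise in
/-- Fibre bound: the fibre over `x = t p` contains a translate of `(1-t)` times the slice. -/
lemma fibre_bound (m k : ℕ) (A : Set ((Fin m → ℝ) × (Fin k → ℝ))) (hconv : Convex ℝ A)
    (x : Fin m → ℝ) (t : ℝ) (ht : 0 < t) (ht1 : t < 1) (hx : t⁻¹ • x ∈ Prod.fst '' A) :
    ENNReal.ofReal ((1 - t) ^ k) * volume {y : Fin k → ℝ | ((0 : Fin m → ℝ), y) ∈ A}
      ≤ volume {y : Fin k → ℝ | (x, y) ∈ A} := by
  obtain ⟨⟨p, q⟩, hpq, hp⟩ := hx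
  simp only at hp
  have hxp : x = t • p := by
    rw [hp, smul_smul, mul_inv_cancel₀ ht.ne', one_smul]
  have h1 : (t • q) +ᵥ ((1 - t) • {y : Fin k → ℝ | ((0 : Fin m → ℝ), y) ∈ A})
      ⊆ {y : Fin k → ℝ | (x, y) ∈ A} := by
    rintro z ⟨w, ⟨y, hy, rfl⟩, rfl⟩
    have := hconv hpq hy ht.le (sub_nonneg.2 ht1.le) (by ring)
    simpa [hxp] using this
  refine le_trans (le_of_eq ?_) (measure_mono h1)
  rw [measure_vadd, Measure.addHaar_smul]
  simp only [Module.finrank_fin_fun]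
  rw [abs_of_nonneg (pow_nonneg (sub_nonneg.2 ht1.le) k)]

lemma beta_nat (m j : ℕ) :
    ∫ t in (0:ℝ)..1, t ^ m * ((j + 1) * (1 - t) ^ j) = (((m + (j + 1)).choose m : ℕ) : ℝ)⁻¹ := by
  have hd : ∀ (j : ℕ) (t : ℝ),
      HasDerivAt (fun t : ℝ => -(1 - t) ^ (j + 1)) ((j + 1) * (1 - t) ^ j) t := by
    intro j t
    have := (((hasDerivAt_id t).const_sub 1).pow (j + 1)).neg
    refine HasDerivAt.congr_deriv (f' := _) this ?_
    simp
  induction m generalizing j with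
  | zero =>
    have := intervalIntegral.integral_eq_sub_of_hasDerivAt (a := 0) (b := 1)
      (fun t _ => hd j t) (Continuous.intervalIntegrable (by fun_prop) _ _)
    simp [this]
  | succ m ih =>
    have hp := intervalIntegral.integral_mul_deriv_eq_deriv_mul (a := 0) (b := 1)
      (u := fun t : ℝ => t ^ (m + 1)) (u' := fun t => ((m + 1 : ℕ) : ℝ) * t ^ m)
      (fun t _ => by simpa using hasDerivAt_pow (m + 1) t) (fun t _ => hd j t)
      (Continuous.intervalIntegrable (by fun_prop) _ _)
      (Continuous.intervalIntegrable (by fun_prop) _ _)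
    rw [hp]
    have h2 : ∫ t in (0:ℝ)..1, ((m + 1 : ℕ) : ℝ) * t ^ m * -(1 - t) ^ (j + 1)
        = -((m + 1) / (j + 2)) *
          ∫ t in (0:ℝ)..1, t ^ m * (((j + 1 : ℕ) + 1) * (1 - t) ^ (j + 1)) := by
      rw [← intervalIntegral.integral_const_mul]
      congr 1
      ext t
      have : (j : ℝ) + 2 ≠ 0 := by positivity
      push_cast
      field_simp
      ring
    rw [h2, ih]
    have h3 := Nat.choose_succ_right_eq (m + (j + 1 + 1)) m
    rw [Nat.add_sub_cancel_left] at h3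
    have e : m + 1 + (j + 1) = m + (j + 1 + 1) := by ring
    rw [e]
    have p1 : (0:ℝ) < ((m + (j + 1 + 1)).choose m : ℕ) := by
      exact_mod_cast Nat.choose_pos (by omega)
    have p2 : (0:ℝ) < ((m + (j + 1 + 1)).choose (m + 1) : ℕ) := by
      exact_mod_cast Nat.choose_pos (by omega)
    have h4 : (((m + (j + 1 + 1)).choose (m + 1) : ℕ) : ℝ) * (m + 1)
        = ((m + (j + 1 + 1)).choose m : ℕ) * (j + 1 + 1) := by exact_mod_cast h3
    have : (j : ℝ) + 2 ≠ 0 := by positivity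
    simp
    field_simp
    linarith

lemma beta_nat_lintegral (m j : ℕ) :
    ∫⁻ t in Ioo (0:ℝ) 1, ENNReal.ofReal (t ^ m * ((j + 1) * (1 - t) ^ j))
      = (((m + (j + 1)).choose m : ℕ) : ℝ≥0∞)⁻¹ := by
  rw [← ofReal_integral_eq_lintegral_ofReal]
  · rw [← integral_Ioc_eq_integral_Ioo, ← intervalIntegral.integral_of_le zero_le_one, beta_nat,
      ENNReal.ofReal_inv_of_pos, ENNReal.ofReal_natCast]
    exact_mod_cast Nat.choose_pos (by omega)
  · refine IntegrableOn.mono_set ?_ Ioo_subset_Icc_self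
    exact Continuous.integrableOn_Icc (by fun_prop)
  · filter_upwards [ae_restrict_mem measurableSet_Ioo] with t ht
    have := ht.1
    have := sub_pos.2 ht.2
    simp only [Pi.zero_apply]
    positivity

lemma tail_lintegral (j : ℕ) (s : ℝ) (hs : s ≤ 1) :
    ∫⁻ t in Ioc s 1, ENNReal.ofReal ((j + 1) * (1 - t) ^ j) = ENNReal.ofReal ((1 - s) ^ (j + 1)) := by
  have hd : ∀ (t : ℝ),
      HasDerivAt (fun t : ℝ => -(1 - t) ^ (j + 1)) ((j + 1) * (1 - t) ^ j) t := by
    intro t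
    have := (((hasDerivAt_id t).const_sub 1).pow (j + 1)).neg
    refine HasDerivAt.congr_deriv (f' := _) this ?_
    simp
  rw [← ofReal_integral_eq_lintegral_ofReal]
  · rw [← intervalIntegral.integral_of_le hs, intervalIntegral.integral_eq_sub_of_hasDerivAt
      (fun t _ => hd t) (Continuous.intervalIntegrable (by fun_prop) _ _)]
    simp
  · refine IntegrableOn.mono_set ?_ Ioc_subset_Icc_self
    exact Continuous.integrableOn_Icc (by fun_prop)
  · filter_upwards [ae_restrict_mem measurableSet_Ioc] with t ht
    have := sub_nonneg.2 ht.2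
    simp only [Pi.zero_apply]
    positivity

/-- One-dimensional layer-cake bound. -/
lemma layer_bound (j : ℕ) (T : Set ℝ) (hT : T ⊆ Ioo 0 1) (v c : ℝ≥0∞)
    (h : ∀ t ∈ T, ENNReal.ofReal ((1 - t) ^ (j + 1)) * v ≤ c) :
    (∫⁻ t in T, ENNReal.ofReal ((j + 1) * (1 - t) ^ j)) * v ≤ c := by
  rcases T.eq_empty_or_nonempty with rfl | hne
  · simp
  have hb : BddBelow T := ⟨0, fun t ht => (hT ht).1.le⟩
  have hs1 : sInf T ≤ 1 := by
    obtain ⟨t, ht⟩ := hne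
    exact (csInf_le hb ht).trans (hT ht).2.le
  have hle : (∫⁻ t in T, ENNReal.ofReal ((j + 1) * (1 - t) ^ j))
      ≤ ENNReal.ofReal ((1 - sInf T) ^ (j + 1)) := by
    rw [← tail_lintegral j _ hs1, restrict_Ioc_eq_restrict_Icc]
    exact lintegral_mono_set fun t ht => ⟨csInf_le hb ht, (hT ht).2.le⟩
  by_cases v0 : v = 0
  · simp [v0]
  by_cases vt : v = ∞
  · obtain ⟨t, ht⟩ := hne
    have h1 := h t ht
    rw [vt, ENNReal.mul_top] at h1
    · rw [top_le_iff.1 h1]; exact le_top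
    · have := sub_pos.2 (hT ht).2
      simp only [ne_eq, ENNReal.ofReal_eq_zero, not_le]
      positivity
  refine (mul_le_mul_left hle v).trans ?_
  rw [← ENNReal.le_div_iff_mul_le (Or.inl v0) (Or.inl vt)]
  have hcl : IsClosed {s : ℝ | ENNReal.ofReal ((1 - s) ^ (j + 1)) ≤ c / v} := by
    apply isClosed_le _ continuous_const
    exact ENNReal.continuous_ofReal.comp (by fun_prop)
  have hsub : T ⊆ {s : ℝ | ENNReal.ofReal ((1 - s) ^ (j + 1)) ≤ c / v} := fun t ht =>
    (ENNReal.le_div_iff_mul_le (Or.inl v0) (Or.inl vt)).2 (h t ht)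
  exact closure_minimal hsub hcl (csInf_mem_closure hne hb)

lemma volume_ge_lintegral (m k : ℕ) (A : Set ((Fin m → ℝ) × (Fin k → ℝ))) :
    ∫⁻ x : Fin m → ℝ, volume {y : Fin k → ℝ | (x, y) ∈ A} ≤ volume A := by
  rw [← measure_toMeasurable A, Measure.volume_eq_prod,
    Measure.prod_apply (measurableSet_toMeasurable _ _)]
  exact lintegral_mono fun x => measure_mono fun y hy => subset_toMeasurable _ _ hy

open scoped Pointwise in
theorem main_lower (m j : ℕ) (U : Set (Fin m → ℝ)) (hU : IsOpen U) :
    ∫⁻ x : Fin m → ℝ, ∫⁻ t in {t : ℝ | t ∈ Ioo (0:ℝ) 1 ∧ t⁻¹ • x ∈ U},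
      ENNReal.ofReal ((j + 1) * (1 - t) ^ j)
      = (((m + (j + 1)).choose m : ℕ) : ℝ≥0∞)⁻¹ * volume U := by
  have hcont : ContinuousOn (fun z : (Fin m → ℝ) × ℝ => z.2⁻¹ • z.1) (univ ×ˢ Ioo (0:ℝ) 1) := by
    have h1 : ContinuousOn (fun z : (Fin m → ℝ) × ℝ => z.2⁻¹) (univ ×ˢ Ioo (0:ℝ) 1) :=
      continuousOn_snd.inv₀ fun z hz => hz.2.1.ne'
    exact h1.smul continuousOn_fst
  have hSo : IsOpen {z : (Fin m → ℝ) × ℝ | z.2 ∈ Ioo (0:ℝ) 1 ∧ z.2⁻¹ • z.1 ∈ U} := by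
    have := hcont.isOpen_inter_preimage (isOpen_univ.prod isOpen_Ioo) hU
    convert this using 1
    ext z
    simp
  set S := {z : (Fin m → ℝ) × ℝ | z.2 ∈ Ioo (0:ℝ) 1 ∧ z.2⁻¹ • z.1 ∈ U} with hS
  set w : ℝ → ℝ≥0∞ := fun t => ENNReal.ofReal ((j + 1) * (1 - t) ^ j) with hw
  have hwm : Measurable w := ENNReal.measurable_ofReal.comp (by fun_prop)
  have e1 : ∀ x : Fin m → ℝ, ∫⁻ t in {t : ℝ | t ∈ Ioo (0:ℝ) 1 ∧ t⁻¹ • x ∈ U}, w t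
      = ∫⁻ t, S.indicator (fun z => w z.2) (x, t) := by
    intro x
    have hm : MeasurableSet {t : ℝ | t ∈ Ioo (0:ℝ) 1 ∧ t⁻¹ • x ∈ U} :=
      (hSo.preimage (f := fun t => (x, t)) (by fun_prop)).measurableSet
    rw [← lintegral_indicator hm]
    rfl
  simp_rw [e1]
  rw [lintegral_lintegral_swap]
  swap
  · exact ((hwm.comp measurable_snd).indicator hSo.measurableSet).aemeasurable
  rw [← beta_nat_lintegral, ← lintegral_mul_const, ← lintegral_indicator measurableSet_Ioo]
  swap
  · exact ENNReal.measurable_ofReal.comp (by fun_prop)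
  congr 1
  ext t
  by_cases ht : t ∈ Ioo (0:ℝ) 1
  · have e2 : ∀ x : Fin m → ℝ, S.indicator (fun z => w z.2) (x, t)
        = (t • U).indicator (fun _ => w t) x := by
      intro x
      have : (x, t) ∈ S ↔ x ∈ t • U := by
        rw [mem_smul_set_iff_inv_smul_mem₀ ht.1.ne']
        simp only [hS, mem_ofPred_eq]
        exact and_iff_right ht
      by_cases hx : x ∈ t • U
      · rw [indicator_of_mem hx, indicator_of_mem (this.2 hx)]
      · rw [indicator_of_notMem hx, indicator_of_notMem (fun h => hx (this.1 h))]
    simp_rw [e2]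
    rw [lintegral_indicator (hU.smul₀ ht.1.ne').measurableSet, setLIntegral_const,
      Measure.addHaar_smul, indicator_of_mem ht, Module.finrank_fin_fun,
      abs_of_nonneg (pow_nonneg ht.1.le m), ENNReal.ofReal_mul (pow_nonneg ht.1.le m)]
    ring
  · rw [indicator_of_notMem ht]
    have : ∀ x : Fin m → ℝ, S.indicator (fun z => w z.2) (x, t) = 0 := fun x =>
      indicator_of_notMem (fun h => ht h.1) _
    simp [this]

theorem convex_slice_projection_volume (m k : ℕ) (hm : 1 ≤ m)
    (A : Set ((Fin m → ℝ) × (Fin k → ℝ))) (hconv : Convex ℝ A) (h0 : (0 : (Fin m → ℝ) × (Fin k → ℝ)) ∈ A) :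
    volume A ≥ (((m + k).choose m : ℝ≥0∞))⁻¹
      * volume {y : Fin k → ℝ | ((0 : Fin m → ℝ), y) ∈ A}
      * volume (Prod.fst '' A) := by
  have hP : Convex ℝ (Prod.fst '' A) := hconv.linear_image (LinearMap.fst ℝ _ _)
  have hvol : volume (Prod.fst '' A) ≤ volume (interior (Prod.fst '' A)) := by
    have hsub : Prod.fst '' A ⊆ interior (Prod.fst '' A) ∪ frontier (Prod.fst '' A) := by
      rw [← closure_eq_interior_union_frontier]
      exact subset_closure
    refine (measure_mono hsub).trans ((measure_union_le _ _).trans ?_)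
    rw [hP.addHaar_frontier volume, add_zero]
  refine le_trans ?_ (volume_ge_lintegral m k A)
  refine (mul_le_mul_right hvol _).trans ?_
  set U := interior (Prod.fst '' A) with hUdef
  have hU : IsOpen U := isOpen_interior
  cases k with
  | zero =>
    have hs : ∀ x ∈ U, volume {y : Fin 0 → ℝ | (x, y) ∈ A} = 1 := by
      intro x hx
      obtain ⟨⟨p, q⟩, hpq, rfl⟩ := interior_subset hx
      have : {y : Fin 0 → ℝ | (p, y) ∈ A} = univ := by
        ext y
        simpa [Subsingleton.elim y q] using hpq
      simp only [this]
      simp [volume_pi]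
    have hs0 : volume {y : Fin 0 → ℝ | ((0 : Fin m → ℝ), y) ∈ A} ≤ 1 := by
      refine (measure_mono (subset_univ _)).trans ?_
      simp [volume_pi]
    calc _ ≤ volume U := by
            simp only [add_zero, Nat.choose_self, Nat.cast_one, inv_one, one_mul]
            exact mul_le_of_le_one_left' hs0
      _ = ∫⁻ x in U, 1 := by simp
      _ = ∫⁻ x in U, volume {y : Fin 0 → ℝ | (x, y) ∈ A} :=
          setLIntegral_congr_fun hU.measurableSet fun x hx => (hs x hx).symm
      _ ≤ _ := setLIntegral_le_lintegral _ _
  | succ j =>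
    rw [mul_right_comm, ← main_lower m j U hU]
    refine le_trans (lintegral_mul_const_le _ _) (lintegral_mono fun x => ?_)
    refine layer_bound j _ (fun t ht => ht.1) _ _ fun t ht => ?_
    exact fibre_bound m (j + 1) A hconv x t ht.1.1 ht.1.2 (interior_subset ht.2)
end

section
/- For any log-concave probability density $f$ of $X^n$ on $\mathbb{R}^n$ and $1 \le m \le n$, the conditional differential entropy satisfies $0 \le h(X_{m+1}^n \mid X^m) + \log_2\big(\int_{\mathbb{R}^m} \sup_{x_{m+1}^n} f(x^m, x_{m+1}^n)\, dx^m\big) \le n \log_2 e + \log_2 \binom{n}{m}$. -/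
open MeasureTheory Set

/-- A density is log-concave if `f(λx+(1-λ)y) ≥ f(x)^λ f(y)^(1-λ)`. -/
def LogConcaveDens {E : Type*} [AddCommGroup E] [Module ℝ E] (f : E → ℝ) : Prop :=
  ∀ x y : E, ∀ l : ℝ, l ∈ Icc (0 : ℝ) 1 →
    f (l • x + (1 - l) • y) ≥ f x ^ l * f y ^ (1 - l)


lemma aux_beta (m : ℕ) : ∀ j : ℕ,
    ((j : ℝ) + 1) * ((m + (j + 1)).choose m : ℝ) * ∫ r in (0:ℝ)..1, (1 - r) ^ m * r ^ j = 1 := by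
  induction m with
  | zero =>
    intro j
    simp [integral_pow]
    field_simp
  | succ m ih =>
    intro j
    have h0 := ih (j + 1)
    have hder : ∀ r ∈ uIcc (0:ℝ) 1, HasDerivAt (fun r : ℝ => (1 - r) ^ (m + 1) * r ^ (j + 1))
        (-((m:ℝ) + 1) * ((1 - r) ^ m * r ^ (j + 1)) + ((j:ℝ) + 1) * ((1 - r) ^ (m + 1) * r ^ j)) r := by
      intro r _
      have h1 : HasDerivAt (fun r : ℝ => 1 - r) (-1) r := by
        simpa using (hasDerivAt_id r).const_sub 1
      have h2 := (h1.pow (m + 1)).mul ((hasDerivAt_id r).pow (j + 1))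
      refine h2.congr_deriv ?_
      simp
      ring
    have hI := intervalIntegral.integral_eq_sub_of_hasDerivAt hder
      (Continuous.intervalIntegrable (by fun_prop) _ _)
    rw [intervalIntegral.integral_add (Continuous.intervalIntegrable (by fun_prop) _ _)
      (Continuous.intervalIntegrable (by fun_prop) _ _),
      intervalIntegral.integral_const_mul, intervalIntegral.integral_const_mul] at hI
    simp at hI
    have hc : ((m + 1 + (j + 1)).choose (m + 1) : ℝ) * (m + 1)
        = ((m + (j + 1 + 1)).choose m : ℝ) * (j + 2) := by
      have := Nat.choose_succ_right_eq (m + (j + 2)) m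
      have e : m + (j + 2) - m = j + 2 := by omega
      rw [e] at this
      have e2 : m + 1 + (j + 1) = m + (j + 2) := by omega
      rw [e2]
      exact_mod_cast this
    push_cast at h0 ⊢
    set A := ∫ r in (0:ℝ)..1, (1 - r) ^ m * r ^ (j + 1)
    set B := ∫ r in (0:ℝ)..1, (1 - r) ^ (m + 1) * r ^ j
    have hAB : ((j:ℝ) + 1) * B = (m + 1) * A := by linarith
    calc ((j:ℝ) + 1) * ((m + 1 + (j + 1)).choose (m + 1) : ℝ) * B
        = ((m + 1 + (j + 1)).choose (m + 1) : ℝ) * (((j:ℝ) + 1) * B) := by ring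
      _ = (((m + 1 + (j + 1)).choose (m + 1) : ℝ) * (m + 1)) * A := by rw [hAB]; ring
      _ = 1 := by rw [hc, ← h0]; ring

lemma aux_int (m j : ℕ) (V : ℝ) (hV : 0 < V) :
    ((m + (j + 1)).choose m : ℝ) *
      ∫ s in (0:ℝ)..V, (1 - (s / V) ^ (1 / ((j:ℝ) + 1))) ^ m = V := by
  have hsub := intervalIntegral.integral_comp_mul_deriv (a := 0) (b := 1)
    (f := fun r : ℝ => V * r ^ (j + 1)) (f' := fun r : ℝ => V * (((j:ℝ) + 1) * r ^ j))
    (g := fun s : ℝ => (1 - (s / V) ^ (1 / ((j:ℝ) + 1))) ^ m)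
    (by
      intro r _
      have := ((hasDerivAt_id r).pow (j + 1)).const_mul V
      refine this.congr_deriv ?_
      simp)
    (by fun_prop)
    (by
      refine (continuous_const.sub ?_).pow m
      exact (continuous_id.div_const V).rpow_const (fun _ => Or.inr (by positivity)))
  simp only [zero_pow (Nat.succ_ne_zero j), mul_zero, one_pow, mul_one] at hsub
  rw [← hsub]
  have : ∫ r in (0:ℝ)..1, ((fun s : ℝ => (1 - (s / V) ^ (1 / ((j:ℝ) + 1))) ^ m) ∘
      fun r : ℝ => V * r ^ (j + 1)) r * (V * (((j:ℝ) + 1) * r ^ j))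
      = ∫ r in (0:ℝ)..1, (V * ((j:ℝ) + 1)) * ((1 - r) ^ m * r ^ j) := by
    apply intervalIntegral.integral_congr
    intro r hr
    rw [uIcc_of_le zero_le_one] at hr
    have e : (V * r ^ (j + 1) / V) ^ (1 / ((j:ℝ) + 1)) = r := by
      rw [mul_div_cancel_left₀ _ hV.ne', ← Real.rpow_natCast, ← Real.rpow_mul hr.1]
      push_cast
      rw [mul_one_div_cancel (by positivity), Real.rpow_one]
    simp only [Function.comp, e]
    ring
  rw [this, intervalIntegral.integral_const_mul]
  have := aux_beta m j
  linear_combination V * this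

lemma rs_set (m k : ℕ) (K : Set ((Fin m → ℝ) × (Fin k → ℝ))) (hK : MeasurableSet K)
    (hc : Convex ℝ K) (x₀ : Fin m → ℝ) :
    volume (Prod.fst '' K) * volume {y | (x₀, y) ∈ K} ≤ ((m + k).choose m : ENNReal) * volume K := by
  have hvolK : volume K = ∫⁻ x, volume {y | (x, y) ∈ K} := by
    rw [Measure.volume_eq_prod, Measure.prod_apply hK]; rfl
  have hmeasK : Measurable (fun x : Fin m → ℝ => volume {y | (x, y) ∈ K}) :=
    measurable_measure_prodMk_left hK
  rcases k with _ | j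
  · -- trivial fiber
    have h1 : volume {y : Fin 0 → ℝ | (x₀, y) ∈ K} ≤ 1 := by
      refine (measure_mono (subset_univ _)).trans ?_
      simp [volume_pi]
    have h2 : volume (Prod.fst '' K) ≤ volume K := by
      rw [hvolK]
      calc volume (Prod.fst '' K) ≤ volume {x | 1 ≤ volume {y : Fin 0 → ℝ | (x, y) ∈ K}} := by
            apply measure_mono
            rintro _ ⟨⟨x, y⟩, h, rfl⟩
            have : {y : Fin 0 → ℝ | (x, y) ∈ K} = univ := by
              ext z; simp [Subsingleton.elim z y, h]
            simp [this, volume_pi]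
        _ ≤ _ := by
            have := mul_meas_ge_le_lintegral hmeasK 1 (μ := volume)
            simpa using this
    calc _ ≤ volume K * 1 := mul_le_mul' h2 h1
      _ = _ := by simp
  · apply ENNReal.mul_le_of_forall_lt
    intro p hp v hv
    have hvtop : v ≠ ⊤ := hv.ne_top
    rcases eq_or_ne v 0 with rfl | hv0
    · simp
    set V := v.toReal with hVdef
    have hV : 0 < V := ENNReal.toReal_pos hv0 hvtop
    have hvV : v = ENNReal.ofReal V := (ENNReal.ofReal_toReal hvtop).symm
    set φ : ℝ → ℝ := fun s => (1 - (s / V) ^ (1 / ((j:ℝ) + 1))) ^ m with hφ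
    set h : (Fin m → ℝ) → ℝ := fun x => (min (volume {y | (x, y) ∈ K}) v).toReal with hh
    have hstep : ∀ s ∈ Ioc 0 V, ENNReal.ofReal (φ s) * volume (Prod.fst '' K) ≤
        volume {x | s ≤ h x} := by
      intro s hs
      set c := (s / V) ^ (1 / ((j:ℝ) + 1)) with hcdef
      have hsV : 0 ≤ s / V := div_nonneg hs.1.le hV.le
      have hc0 : 0 ≤ c := by positivity
      have hc1 : c ≤ 1 := Real.rpow_le_one hsV ((div_le_one hV).2 hs.2) (by positivity)
      have hck : c ^ (j + 1) * V = s := by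
        rw [hcdef, ← Real.rpow_natCast, ← Real.rpow_mul hsV]
        push_cast
        rw [one_div_mul_cancel (by positivity), Real.rpow_one]
        field_simp
      have himg : volume (AffineMap.homothety x₀ (1 - c) '' (Prod.fst '' K))
          = ENNReal.ofReal (φ s) * volume (Prod.fst '' K) := by
        rw [Measure.addHaar_image_homothety]
        simp only [Module.finrank_fintype_fun_eq_card, Fintype.card_fin]
        rw [abs_of_nonneg (pow_nonneg (by linarith) _)]
      rw [← himg]
      apply measure_mono
      rintro _ ⟨_, ⟨⟨x, y⟩, hxy, rfl⟩, rfl⟩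
      have hsub : AffineMap.homothety y c '' {y | (x₀, y) ∈ K} ⊆
          {z | (AffineMap.homothety x₀ (1 - c) x, z) ∈ K} := by
        rintro _ ⟨z, hz, rfl⟩
        have := hc hxy hz (sub_nonneg.2 hc1) hc0 (by ring)
        simp only [mem_ofPred_eq]
        convert this using 1
        ext i
        · simp [AffineMap.homothety_apply]; ring
        · simp [AffineMap.homothety_apply]; ring
      have hm := measure_mono (μ := volume) hsub
      rw [Measure.addHaar_image_homothety] at hm
      simp only [Module.finrank_fintype_fun_eq_card, Fintype.card_fin] at hm
      rw [abs_of_nonneg (pow_nonneg hc0 _)] at hm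
      have hs1 : ENNReal.ofReal s ≤ volume {z | (AffineMap.homothety x₀ (1 - c) x, z) ∈ K} := by
        refine le_trans ?_ hm
        rw [← hck, ENNReal.ofReal_mul (by positivity), ← hvV]
        gcongr
      have hs2 : ENNReal.ofReal s ≤ v := by
        rw [hvV]; exact ENNReal.ofReal_le_ofReal hs.2
      simp only [mem_ofPred_eq, hh]
      rw [← ENNReal.ofReal_le_iff_le_toReal (by simp [hvtop])]
      exact le_min hs1 hs2
    have hφc : Continuous φ := by
      refine (continuous_const.sub ?_).pow m
      exact (continuous_id.div_const V).rpow_const (fun _ => Or.inr (by positivity))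
    have hφ0 : ∀ s ∈ Ioc 0 V, 0 ≤ φ s := by
      intro s hs
      apply pow_nonneg
      have : (s / V) ^ (1 / ((j:ℝ) + 1)) ≤ 1 :=
        Real.rpow_le_one (div_nonneg hs.1.le hV.le) ((div_le_one hV).2 hs.2) (by positivity)
      linarith
    have hint : ∫⁻ s in Ioc 0 V, ENNReal.ofReal (φ s) = ENNReal.ofReal (∫ s in (0:ℝ)..V, φ s) := by
      rw [intervalIntegral.integral_of_le hV.le, ofReal_integral_eq_lintegral_ofReal]
      · exact (hφc.integrableOn_Icc).mono_set Ioc_subset_Icc_self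
      · filter_upwards [ae_restrict_mem measurableSet_Ioc] with s hs using hφ0 s hs
    have hmain : ENNReal.ofReal (∫ s in (0:ℝ)..V, φ s) * volume (Prod.fst '' K) ≤ volume K := by
      calc _ = ∫⁻ s in Ioc 0 V, ENNReal.ofReal (φ s) * volume (Prod.fst '' K) := by
            rw [lintegral_mul_const _ (by fun_prop), hint]
        _ ≤ ∫⁻ s in Ioc 0 V, volume {x | s ≤ h x} :=
            setLIntegral_mono' measurableSet_Ioc hstep
        _ ≤ ∫⁻ s in Ioi 0, volume {x | s ≤ h x} := lintegral_mono_set Ioc_subset_Ioi_self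
        _ = ∫⁻ x, ENNReal.ofReal (h x) := by
            rw [lintegral_eq_lintegral_meas_le]
            · exact Filter.Eventually.of_forall fun x => ENNReal.toReal_nonneg
            · exact ((hmeasK.min measurable_const).ennreal_toReal).aemeasurable
        _ ≤ ∫⁻ x, volume {y | (x, y) ∈ K} := by
            apply lintegral_mono
            intro x
            exact ENNReal.ofReal_toReal_le.trans (min_le_left _ _)
        _ = _ := hvolK.symm
    have hC := aux_int m j V hV
    calc p * v ≤ volume (Prod.fst '' K) * ENNReal.ofReal V := by rw [← hvV]; gcongr
      _ = ((m + (j + 1)).choose m : ENNReal) *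
          (ENNReal.ofReal (∫ s in (0:ℝ)..V, φ s) * volume (Prod.fst '' K)) := by
          rw [← hC, ENNReal.ofReal_mul (by positivity), ENNReal.ofReal_natCast, hC]
          ring
      _ ≤ _ := by gcongr

lemma rearr_ennreal {a b c d : ENNReal} (h1 : a ≤ b) (h2 : c ≤ d) :
    a * d + b * c ≤ a * c + b * d := by
  obtain ⟨b', rfl⟩ := exists_add_of_le h1
  obtain ⟨d', rfl⟩ := exists_add_of_le h2
  calc a * (c + d') + (a + b') * c ≤ a * (c + d') + (a + b') * c + b' * d' := le_self_add
    _ = _ := by ring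

lemma chebyshev_antitone (p q : ℝ → ENNReal) (hp : Antitone p) (hq : Antitone q) (M : ℝ) :
    (∫⁻ t in Ioo 0 M, p t) * (∫⁻ t in Ioo 0 M, q t) ≤
      ENNReal.ofReal M * ∫⁻ t in Ioo 0 M, p t * q t := by
  have hpm := hp.measurable
  have hqm := hq.measurable
  set μ := (volume : Measure ℝ).restrict (Ioo 0 M) with hμ
  have hμ1 : μ univ = ENNReal.ofReal M := by simp [hμ]
  have key : ∫⁻ s, ∫⁻ t, (p s * q t + p t * q s) ∂μ ∂μ ≤
      ∫⁻ s, ∫⁻ t, (p s * q s + p t * q t) ∂μ ∂μ := by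
    apply lintegral_mono; intro s
    apply lintegral_mono; intro t
    rcases le_total s t with h | h
    · have := rearr_ennreal (hp h) (hq h)
      calc p s * q t + p t * q s = p t * q s + p s * q t := add_comm _ _
        _ ≤ p t * q t + p s * q s := this
        _ = _ := add_comm _ _
    · exact rearr_ennreal (hp h) (hq h)
  have hL : ∫⁻ s, ∫⁻ t, (p s * q t + p t * q s) ∂μ ∂μ = 2 * ((∫⁻ t, p t ∂μ) * ∫⁻ t, q t ∂μ) := by
    have : ∀ s, ∫⁻ t, (p s * q t + p t * q s) ∂μ = p s * (∫⁻ t, q t ∂μ) + (∫⁻ t, p t ∂μ) * q s := by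
      intro s
      rw [lintegral_add_left (by fun_prop), lintegral_const_mul _ hqm, lintegral_mul_const _ hpm]
    simp_rw [this]
    rw [lintegral_add_left (by fun_prop), lintegral_const_mul _ hqm, lintegral_mul_const _ hpm]
    ring
  have hR : ∫⁻ s, ∫⁻ t, (p s * q s + p t * q t) ∂μ ∂μ =
      2 * (ENNReal.ofReal M * ∫⁻ t, p t * q t ∂μ) := by
    have : ∀ s, ∫⁻ t, (p s * q s + p t * q t) ∂μ =
        p s * q s * ENNReal.ofReal M + ∫⁻ t, p t * q t ∂μ := by
      intro s
      rw [lintegral_add_left (by fun_prop), lintegral_const, hμ1]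
    simp_rw [this]
    rw [lintegral_add_left (by fun_prop), lintegral_mul_const _ (by fun_prop), lintegral_const, hμ1]
    ring
  rw [hL, hR] at key
  exact (ENNReal.mul_le_mul_iff_right (by simp) (by simp)).1 key

lemma lc_level_convex {E : Type*} [AddCommGroup E] [Module ℝ E] (f : E → ℝ)
    (hlc : LogConcaveDens f) (t : ℝ) (ht : 0 < t) : Convex ℝ {z | t < f z} := by
  intro x hx y hy a b ha hb hab
  have hb' : b = 1 - a := by linarith
  subst hb'
  have h := hlc x y a ⟨ha, by linarith⟩
  rw [mem_ofPred_eq] at hx hy ⊢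
  refine lt_of_lt_of_le ?_ h
  have ht1 : t = t ^ a * t ^ (1 - a) := by
    rw [← Real.rpow_add ht]; simp
  rcases ha.eq_or_lt with rfl | ha'
  · simpa using hy
  · calc t = t ^ a * t ^ (1 - a) := ht1
      _ < f x ^ a * t ^ (1 - a) := by
        apply mul_lt_mul_of_pos_right _ (Real.rpow_pos_of_pos ht _)
        exact Real.rpow_lt_rpow ht.le hx ha'
      _ ≤ f x ^ a * f y ^ (1 - a) := by
        apply mul_le_mul_of_nonneg_left _ (Real.rpow_nonneg (ht.trans hx).le _)
        exact Real.rpow_le_rpow ht.le hy.le hb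

lemma rs_fun (m k : ℕ)
    (f : (Fin m → ℝ) × (Fin k → ℝ) → ℝ)
    (hmeas : Measurable f) (hnn : ∀ x, 0 ≤ f x)
    (hlc : LogConcaveDens f)
    (hsupm : AEMeasurable (fun x : Fin m → ℝ => ⨆ y, f (x, y)))
    (M : ℝ) (hM : ∀ x, f x ≤ M) (x₀ : Fin m → ℝ) :
    (∫⁻ x : Fin m → ℝ, ENNReal.ofReal (⨆ y, f (x, y))) * (∫⁻ y, ENNReal.ofReal (f (x₀, y))) ≤
      ENNReal.ofReal M * (((m + k).choose m : ENNReal) * ∫⁻ z, ENNReal.ofReal (f z)) := by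
  have hbd : ∀ x : Fin m → ℝ, BddAbove (range fun y => f (x, y)) := fun x =>
    ⟨M, by rintro _ ⟨y, rfl⟩; exact hM _⟩
  set p : ℝ → ENNReal := fun t => volume {x : Fin m → ℝ | t < ⨆ y, f (x, y)} with hp
  set q : ℝ → ENNReal := fun t => volume {y : Fin k → ℝ | t < f (x₀, y)} with hq
  have hpa : Antitone p := fun s t hst => measure_mono fun x hx => lt_of_le_of_lt hst hx
  have hqa : Antitone q := fun s t hst => measure_mono fun x hx => lt_of_le_of_lt hst hx
  have hcut : ∀ r : ℝ → ENNReal, (∀ t, M ≤ t → r t = 0) →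
      ∫⁻ t in Ioi 0, r t = ∫⁻ t in Ioo 0 M, r t := by
    intro r hr
    rw [← lintegral_indicator measurableSet_Ioi, ← lintegral_indicator measurableSet_Ioo]
    congr 1
    ext t
    by_cases h0 : 0 < t <;> by_cases h1 : t < M
    · simp [indicator, h0, h1]
    · simp [indicator, h0, h1, hr t (not_lt.1 h1)]
    · simp [indicator, h0]
    · simp [indicator, h0]
  have hp0 : ∀ t, M ≤ t → p t = 0 := by
    intro t ht
    have : {x : Fin m → ℝ | t < ⨆ y, f (x, y)} = ∅ := by
      ext x
      simp only [mem_ofPred_eq, mem_empty_iff_false, iff_false, not_lt]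
      exact (ciSup_le fun y => hM _).trans ht
    simp [hp, this]
  have hq0 : ∀ t, M ≤ t → q t = 0 := by
    intro t ht
    have : {y : Fin k → ℝ | t < f (x₀, y)} = ∅ := by
      ext x
      simp only [mem_ofPred_eq, mem_empty_iff_false, iff_false, not_lt]
      exact (hM _).trans ht
    simp [hq, this]
  have h1 : ∫⁻ x : Fin m → ℝ, ENNReal.ofReal (⨆ y, f (x, y)) = ∫⁻ t in Ioo 0 M, p t := by
    rw [lintegral_eq_lintegral_meas_lt _ (Filter.Eventually.of_forall fun x =>
      Real.iSup_nonneg fun y => hnn _) hsupm, ← hcut p hp0]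
  have h2 : ∫⁻ y, ENNReal.ofReal (f (x₀, y)) = ∫⁻ t in Ioo 0 M, q t := by
    rw [lintegral_eq_lintegral_meas_lt _ (Filter.Eventually.of_forall fun x => hnn _)
      (hmeas.comp measurable_prodMk_left).aemeasurable, ← hcut q hq0]
  rw [h1, h2]
  refine (chebyshev_antitone p q hpa hqa M).trans ?_
  gcongr
  rw [lintegral_eq_lintegral_meas_lt _ (Filter.Eventually.of_forall fun x => hnn _)
      hmeas.aemeasurable]
  calc ∫⁻ t in Ioo 0 M, p t * q t
      ≤ ∫⁻ t in Ioo 0 M, ((m + k).choose m : ENNReal) * volume {z | t < f z} := by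
        apply setLIntegral_mono' measurableSet_Ioo
        intro t ht
        have := rs_set m k {z | t < f z} (measurableSet_lt measurable_const hmeas)
          (lc_level_convex f hlc t ht.1) x₀
        refine le_trans ?_ this
        apply mul_le_mul' _ le_rfl
        apply measure_mono
        intro x hx
        obtain ⟨y, hy⟩ := exists_lt_of_lt_ciSup (show t < ⨆ y, f (x, y) from hx)
        exact ⟨(x, y), hy, rfl⟩
    _ ≤ ∫⁻ t in Ioi 0, ((m + k).choose m : ENNReal) * volume {z | t < f z} :=
        lintegral_mono_set Ioo_subset_Ioi_self
    _ = _ := by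
        rw [lintegral_const_mul']
        simp

lemma entropy_lower {E : Type*} [NormedAddCommGroup E] [NormedSpace ℝ E] [MeasurableSpace E]
    [BorelSpace E] [FiniteDimensional ℝ E] (μ : Measure E) [μ.IsAddHaarMeasure]
    (f : E → ℝ) (hnn : ∀ x, 0 ≤ f x) (hpdf : ∫ x, f x ∂μ = 1)
    (hlc : LogConcaveDens f) (hf : Integrable f μ)
    (hint : Integrable (fun x => f x * Real.log (f x)) μ) (z : E) (hz : 0 < f z) :
    Real.log (f z) - Module.finrank ℝ E ≤ ∫ x, f x * Real.log (f x) ∂μ := by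
  set n := Module.finrank ℝ E with hn
  set H := ∫ x, f x * Real.log (f x) ∂μ with hH
  have key : ∀ l ∈ Ioo (0:ℝ) 1, 1 + (1 - l) * (Real.log (f z) - H) ≤ (l ^ n)⁻¹ := by
    intro l hl
    have hi : Integrable (fun x => f (l • x + (1 - l) • z)) μ := by
      have h1 : Integrable (fun x => f (x + (1 - l) • z)) μ := hf.comp_add_right _
      exact h1.comp_smul hl.1.ne'
    have hv : ∫ x, f (l • x + (1 - l) • z) ∂μ = (l ^ n)⁻¹ := by
      rw [Measure.integral_comp_smul μ (fun x => f (x + (1 - l) • z)) l, integral_add_right_eq_self,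
        hpdf, abs_of_nonneg (inv_nonneg.2 (pow_nonneg hl.1.le _))]
      simp [hn]
    have hpt : ∀ x, f x + (1 - l) * (Real.log (f z) * f x - f x * Real.log (f x)) ≤
        f (l • x + (1 - l) • z) := by
      intro x
      rcases (hnn x).eq_or_lt with h0 | h0
      · rw [← h0]; simpa using hnn _
      · refine le_trans ?_ (hlc x z l ⟨hl.1.le, hl.2.le⟩)
        have e : f x ^ l * f z ^ (1 - l) =
            f x * Real.exp ((1 - l) * (Real.log (f z) - Real.log (f x))) := by
          rw [Real.rpow_def_of_pos h0, Real.rpow_def_of_pos hz]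
          have e1 : f x * Real.exp ((1 - l) * (Real.log (f z) - Real.log (f x))) =
              Real.exp (Real.log (f x)) * Real.exp ((1 - l) * (Real.log (f z) - Real.log (f x))) := by
            rw [Real.exp_log h0]
          rw [e1, ← Real.exp_add, ← Real.exp_add]
          congr 1; ring
        rw [e]
        have := Real.add_one_le_exp ((1 - l) * (Real.log (f z) - Real.log (f x)))
        have := mul_le_mul_of_nonneg_left this h0.le
        linarith
    have hJ : Integrable (fun x => (1 - l) * (Real.log (f z) * f x - f x * Real.log (f x))) μ :=
      ((hf.const_mul _).sub hint).const_mul _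
    have hI : Integrable (fun x => f x + (1 - l) * (Real.log (f z) * f x - f x * Real.log (f x))) μ :=
      hf.add hJ
    have := integral_mono hI hi hpt
    rw [hv, integral_add hf hJ, integral_const_mul,
      integral_sub (hf.const_mul _) hint, integral_const_mul, hpdf] at this
    simpa using this
  -- multiply by l^n and let l tend to 1
  have hber : ∀ l ∈ Ioo (0:ℝ) 1, l ^ n * (Real.log (f z) - H) ≤ n := by
    intro l hl
    have h := key l hl
    have hln : 0 < l ^ n := pow_pos hl.1 _
    have h' : l ^ n * (1 + (1 - l) * (Real.log (f z) - H)) ≤ 1 := by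
      calc _ ≤ l ^ n * (l ^ n)⁻¹ := by gcongr
        _ = 1 := mul_inv_cancel₀ hln.ne'
    have hb := one_add_mul_le_pow (a := l - 1) (by linarith [hl.1]) n
    have hb' : 1 - n * (1 - l) ≤ l ^ n := by
      have : (1 + (l - 1)) = l := by ring
      rw [this] at hb; linarith
    have h1l : 0 < 1 - l := by linarith [hl.2]
    have : (1 - l) * (l ^ n * (Real.log (f z) - H)) ≤ (1 - l) * n := by linarith
    exact le_of_mul_le_mul_left this h1l
  have hlim : Filter.Tendsto (fun l : ℝ => l ^ n * (Real.log (f z) - H)) (nhdsWithin 1 (Iio 1))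
      (nhds (1 ^ n * (Real.log (f z) - H))) := by
    apply Filter.Tendsto.mono_left _ nhdsWithin_le_nhds
    exact Continuous.tendsto (by fun_prop) 1
  have := le_of_tendsto hlim (by
    filter_upwards [Ioo_mem_nhdsLT (zero_lt_one (α := ℝ))] with l hl using hber l hl)
  simp at this
  linarith

lemma nat_log_bound (m k : ℕ)
    (f : (Fin m → ℝ) × (Fin k → ℝ) → ℝ)
    (hmeas : Measurable f) (hnn : ∀ x, 0 ≤ f x) (hpdf : ∫ x, f x = 1)
    (hlc : LogConcaveDens f)
    (hint₁ : Integrable (fun x => f x * Real.log (f x)))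
    (hint₂ : Integrable (fun x : Fin m → ℝ =>
      (∫ y, f (x, y)) * Real.log (∫ y, f (x, y))))
    (hsupint : Integrable (fun x : Fin m → ℝ => ⨆ y, f (x, y)))
    (hbdd : BddAbove (Set.range f)) :
    (∫ x, f x * Real.log (f x)) ≤
      (∫ x : Fin m → ℝ, (∫ y, f (x, y)) * Real.log (∫ y, f (x, y)))
        + Real.log (∫ x : Fin m → ℝ, ⨆ y, f (x, y)) ∧
    (∫ x : Fin m → ℝ, (∫ y, f (x, y)) * Real.log (∫ y, f (x, y)))
        + Real.log (∫ x : Fin m → ℝ, ⨆ y, f (x, y))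
      ≤ (∫ x, f x * Real.log (f x)) + (m + k) + Real.log ((m + k).choose m) := by
  have hf : Integrable f := by
    by_contra h
    rw [integral_undef h] at hpdf
    norm_num at hpdf
  obtain ⟨M, hMlub⟩ : ∃ M, IsLUB (range f) M := ⟨_, isLUB_csSup (range_nonempty f) hbdd⟩
  have hM : ∀ z, f z ≤ M := fun z => hMlub.1 ⟨z, rfl⟩
  have hbd : ∀ x : Fin m → ℝ, BddAbove (range fun y => f (x, y)) := fun x =>
    ⟨M, by rintro _ ⟨y, rfl⟩; exact hM _⟩
  set F : (Fin m → ℝ) → ℝ := fun x => ∫ y, f (x, y) with hF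
  set g : (Fin m → ℝ) → ℝ := fun x => ⨆ y, f (x, y) with hg
  set S := ∫ x, g x with hS
  have hfg : ∀ x y, f (x, y) ≤ g x := fun x y => le_ciSup (hbd x) y
  have hg0 : ∀ x, 0 ≤ g x := fun x => Real.iSup_nonneg fun y => hnn _
  have hF0 : ∀ x, 0 ≤ F x := fun x => integral_nonneg fun y => hnn _
  have hfp : Integrable f ((volume : Measure (Fin m → ℝ)).prod (volume : Measure (Fin k → ℝ))) := hf
  have hint₁p : Integrable (fun x => f x * Real.log (f x))
    ((volume : Measure (Fin m → ℝ)).prod (volume : Measure (Fin k → ℝ))) := hint₁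
  have hFi : Integrable F := hfp.integral_prod_left
  have hF1 : ∫ x, F x = 1 := by
    rw [← hpdf]
    exact (integral_prod f hfp).symm
  have hSpos : 0 < S := by
    rw [hS, integral_pos_iff_support_of_nonneg hg0 hsupint, pos_iff_ne_zero]
    intro h0
    have hgz : g =ᵐ[volume] 0 := by
      rw [Filter.EventuallyEq, ae_iff]
      exact h0
    have : ∫ x, F x = 0 := by
      apply integral_eq_zero_of_ae
      filter_upwards [hgz] with x hx
      have : ∀ y, f (x, y) = 0 := fun y => le_antisymm ((hfg x y).trans hx.le) (hnn _)
      simp [hF, this]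
    linarith
  have hMpos : 0 < M := by
    by_contra h
    have : ∀ z, f z = 0 := fun z => le_antisymm ((hM z).trans (not_lt.1 h)) (hnn _)
    simp [this] at hpdf
  constructor
  · have hmain : ∫ x, (∫ y, f (x, y) * Real.log (f (x, y))) ≤
        ∫ x, (F x * Real.log (F x) + Real.log S * F x + (S⁻¹ * g x - F x)) := by
      apply integral_mono_ae
      · exact hint₁p.integral_prod_left
      · exact (hint₂.add (hFi.const_mul _)).add ((hsupint.const_mul _).sub hFi)
      filter_upwards [hfp.prod_right_ae, hint₁p.prod_right_ae] with x hx1 hx2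
      have h1 : ∫ y, f (x, y) * Real.log (f (x, y)) ≤ F x * Real.log (g x) := by
        rw [hF, ← integral_mul_const]
        apply integral_mono hx2 (hx1.mul_const _)
        intro y
        rcases (hnn (x, y)).eq_or_lt with h | h
        · simp [← h]
        · exact mul_le_mul_of_nonneg_left (Real.log_le_log h (hfg x y)) h.le
      refine h1.trans ?_
      rcases (hF0 x).eq_or_lt with h | h
      · rw [← h]
        have := mul_nonneg (inv_nonneg.2 hSpos.le) (hg0 x)
        simpa using this
      · have hgp : 0 < g x := by
          rcases (hg0 x).eq_or_lt with h' | h'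
          · exfalso
            have : ∀ y, f (x, y) = 0 := fun y => le_antisymm ((hfg x y).trans h'.symm.le) (hnn _)
            simp [hF, this] at h
          · exact h'
        have hl := Real.log_le_sub_one_of_pos (x := g x / (F x * S)) (by positivity)
        rw [Real.log_div hgp.ne' (by positivity), Real.log_mul h.ne' hSpos.ne'] at hl
        have := mul_le_mul_of_nonneg_left hl h.le
        have e : F x * (g x / (F x * S) - 1) = S⁻¹ * g x - F x := by
          field_simp
        rw [e] at this
        linarith
    have e1 : ∫ x, f x * Real.log (f x) = ∫ x, (∫ y, f (x, y) * Real.log (f (x, y))) :=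
      integral_prod _ hint₁p
    have hA : Integrable (fun x => Real.log S * F x) := hFi.const_mul _
    have hB : Integrable (fun x => S⁻¹ * g x) := hsupint.const_mul _
    have hD : Integrable (fun x => S⁻¹ * g x - F x) := hB.sub hFi
    have hE : Integrable (fun x => F x * Real.log (F x) + Real.log S * F x) := hint₂.add hA
    rw [integral_add hE hD, integral_add hint₂ hA, integral_sub hB hFi, integral_const_mul,
      integral_const_mul, hF1, ← hS, inv_mul_cancel₀ hSpos.ne', ← e1] at hmain
    linarith
  · have hCpos : (0:ℝ) < ((m + k).choose m : ℝ) := by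
      exact_mod_cast Nat.choose_pos (Nat.le_add_right m k)
    have hFB : ∀ x, F x ≤ M * (m + k).choose m / S := by
      intro x₀
      have h := rs_fun m k f hmeas hnn hlc hsupint.aemeasurable M hM x₀
      rw [← ofReal_integral_eq_lintegral_ofReal hsupint (Filter.Eventually.of_forall hg0),
        ← ofReal_integral_eq_lintegral_ofReal hf (Filter.Eventually.of_forall hnn), hpdf] at h
      have h2 : ENNReal.ofReal (F x₀) ≤ ∫⁻ y, ENNReal.ofReal (f (x₀, y)) := by
        by_cases hi : Integrable (fun y => f (x₀, y))
        · rw [← ofReal_integral_eq_lintegral_ofReal hi (Filter.Eventually.of_forall fun y => hnn _)]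
        · simp [hF, integral_undef hi]
      have h3 : ENNReal.ofReal (S * F x₀) ≤ ENNReal.ofReal (M * (m + k).choose m) := by
        rw [ENNReal.ofReal_mul hSpos.le, ENNReal.ofReal_mul hMpos.le, ENNReal.ofReal_natCast]
        refine (mul_le_mul' le_rfl h2).trans ?_
        simpa using h
      rw [ENNReal.ofReal_le_ofReal_iff (by positivity)] at h3
      rw [le_div_iff₀ hSpos]
      linarith
    have hm : ∫ x, F x * Real.log (F x) ≤ Real.log (M * (m + k).choose m / S) := by
      calc ∫ x, F x * Real.log (F x) ≤ ∫ x, F x * Real.log (M * (m + k).choose m / S) := by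
            apply integral_mono hint₂ (hFi.mul_const _)
            intro x
            rcases (hF0 x).eq_or_lt with h | h
            · show F x * Real.log (F x) ≤ F x * _
              rw [← h]; simp
            · exact mul_le_mul_of_nonneg_left (Real.log_le_log h (hFB x)) h.le
        _ = _ := by rw [integral_mul_const, hF1, one_mul]
    rw [Real.log_div (by positivity) hSpos.ne', Real.log_mul hMpos.ne' hCpos.ne'] at hm
    have hH : Real.log M - (m + k) ≤ ∫ x, f x * Real.log (f x) := by
      rw [sub_le_iff_le_add, Real.log_le_iff_le_exp hMpos]
      refine hMlub.2 ?_
      rintro _ ⟨z, rfl⟩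
      rcases (hnn z).eq_or_lt with h | h
      · rw [← h]; positivity
      · haveI : (volume : Measure ((Fin m → ℝ) × (Fin k → ℝ))).IsAddHaarMeasure :=
          Measure.prod.instIsAddHaarMeasure _ _
        have := entropy_lower (volume : Measure ((Fin m → ℝ) × (Fin k → ℝ)))
          f hnn hpdf hlc hf hint₁ z h
        simp only [Module.finrank_prod, Module.finrank_fintype_fun_eq_card, Fintype.card_fin] at this
        rw [← Real.log_le_iff_le_exp h]
        push_cast at this
        linarith
    linarith

theorem logconcave_conditional_entropy_bound (m k : ℕ) (hm : 1 ≤ m)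
    (f : (Fin m → ℝ) × (Fin k → ℝ) → ℝ)
    (hmeas : Measurable f) (hnn : ∀ x, 0 ≤ f x) (hpdf : ∫ x, f x = 1)
    (hlc : LogConcaveDens f)
    (hint₁ : Integrable (fun x => f x * Real.logb 2 (f x)))
    (hint₂ : Integrable (fun x : Fin m → ℝ =>
      (∫ y, f (x, y)) * Real.logb 2 (∫ y, f (x, y))))
    (hsupint : Integrable (fun x : Fin m → ℝ => ⨆ y, f (x, y)))
    (hbdd : BddAbove (Set.range f)) :
    0 ≤ ((-∫ x, f x * Real.logb 2 (f x))
          - (-∫ x : Fin m → ℝ, (∫ y, f (x, y)) * Real.logb 2 (∫ y, f (x, y))))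
        + Real.logb 2 (∫ x : Fin m → ℝ, ⨆ y, f (x, y)) ∧
    ((-∫ x, f x * Real.logb 2 (f x))
          - (-∫ x : Fin m → ℝ, (∫ y, f (x, y)) * Real.logb 2 (∫ y, f (x, y))))
        + Real.logb 2 (∫ x : Fin m → ℝ, ⨆ y, f (x, y))
      ≤ (m + k) * Real.logb 2 (Real.exp 1) + Real.logb 2 ((m + k).choose m) := by
  have hl2 : 0 < Real.log 2 := Real.log_pos (by norm_num)
  have e1 : (fun x => f x * Real.logb 2 (f x)) = fun x => (Real.log 2)⁻¹ * (f x * Real.log (f x)) := by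
    ext x; rw [Real.logb]; ring
  have e2 : (fun x : Fin m → ℝ => (∫ y, f (x, y)) * Real.logb 2 (∫ y, f (x, y))) =
      fun x => (Real.log 2)⁻¹ * ((∫ y, f (x, y)) * Real.log (∫ y, f (x, y))) := by
    ext x; rw [Real.logb]; ring
  rw [e1] at hint₁ ⊢
  rw [e2] at hint₂ ⊢
  have hi1 : Integrable (fun x => f x * Real.log (f x)) :=
    (integrable_const_mul_iff (isUnit_iff_ne_zero.2 (inv_ne_zero hl2.ne')) _).1 hint₁
  have hi2 : Integrable (fun x : Fin m → ℝ => (∫ y, f (x, y)) * Real.log (∫ y, f (x, y))) :=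
    (integrable_const_mul_iff (isUnit_iff_ne_zero.2 (inv_ne_zero hl2.ne')) _).1 hint₂
  obtain ⟨h1, h2⟩ := nat_log_bound m k f hmeas hnn hpdf hlc hi1 hi2 hsupint hbdd
  rw [integral_const_mul, integral_const_mul]
  simp only [Real.logb, Real.log_exp, div_eq_mul_inv, one_mul]
  set A := ∫ x, f x * Real.log (f x)
  set B := ∫ x : Fin m → ℝ, (∫ y, f (x, y)) * Real.log (∫ y, f (x, y))
  set L := Real.log (∫ x : Fin m → ℝ, ⨆ y, f (x, y))
  have hc : 0 < (Real.log 2)⁻¹ := inv_pos.2 hl2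
  constructor
  · have := mul_le_mul_of_nonneg_left h1 hc.le
    linarith
  · have := mul_le_mul_of_nonneg_left h2 hc.le
    linarith
end
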